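/- Let G be a basic CUH graph that omits D and in which at least one color class does not form an independent set, and assume ω_R = ℵ₀. Then for all natural numbers r and k with k ≤ α_B, the join of a red r-clique with a blue independent set of size k (all rk cross edges present) and its cross-edge complement (the disjoint union, with no cross edges) are both realized in G. -/

import Mathlib

open SimpleGraph

/-- A partial colored isomorphism of the 2-colored graph `(G, red)`, defined on the set `S`:
an injective map preserving colors and adjacency on `S`. -/
def IsPartialIso {V : Type} (G : SimpleGraph V) (red : V → Prop) (S : Set V) (f : V → V) :
    Prop :=
  Set.InjOn f S ∧ (∀ v ∈ S, (red (f v) ↔ red v)) ∧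
    ∀ u ∈ S, ∀ v ∈ S, (G.Adj (f u) (f v) ↔ G.Adj u v)

/-- A 2-colored graph is ultrahomogeneous if every isomorphism between two finite induced
colored subgraphs extends to a color-preserving automorphism. -/
def Ultrahomogeneous {V : Type} (G : SimpleGraph V) (red : V → Prop) : Prop :=
  ∀ S : Set V, S.Finite → ∀ f : V → V, IsPartialIso G red S f →
    ∃ ψ : G ≃g G, (∀ v, red (ψ v) ↔ red v) ∧ ∀ v ∈ S, ψ v = f v

/-- The set `P` induces a disjoint union of cliques in `G` (no induced monochromatic `P₃`). -/
def IsUnionOfCliques {V : Type} (G : SimpleGraph V) (P : Set V) : Prop :=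
  ∀ u ∈ P, ∀ v ∈ P, ∀ w ∈ P, G.Adj u v → G.Adj v w → u ≠ w → G.Adj u w

/-- `M` is an inclusion-wise maximal clique of the subgraph of `G` induced on `P`. -/
def IsMaxCliqueIn {V : Type} (G : SimpleGraph V) (P : Set V) (M : Set V) : Prop :=
  M ⊆ P ∧ G.IsClique M ∧ ∀ M' : Set V, M' ⊆ P → G.IsClique M' → M ⊆ M' → M = M'

/-- `S` is an independent set in `G`. -/
def IsIndepIn {V : Type} (G : SimpleGraph V) (S : Set V) : Prop :=
  ∀ u ∈ S, ∀ v ∈ S, ¬ G.Adj u v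

/-- The 2-colored graph `(H, redH)` is realized in `(G, red)`, i.e. isomorphic to an
induced colored subgraph of `G`. -/
def Realizes {V : Type} (G : SimpleGraph V) (red : V → Prop) {W : Type} (H : SimpleGraph W)
    (redH : W → Prop) : Prop :=
  ∃ f : W → V, Function.Injective f ∧ (∀ w, red (f w) ↔ redH w) ∧
    ∀ u w : W, G.Adj (f u) (f w) ↔ H.Adj u w

/-- `(H, redH)` is minimally omitted in `(G, red)`: it is omitted, but every proper induced
subgraph of it is realized. -/
def MinOmitted {V : Type} (G : SimpleGraph V) (red : V → Prop) {W : Type} (H : SimpleGraph W)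
    (redH : W → Prop) : Prop :=
  ¬ Realizes G red H redH ∧
    ∀ S : Set W, S ≠ Set.univ → Realizes G red (H.induce S) (fun x => redH x.1)

/-- Isomorphism of 2-colored graphs. -/
def ColoredIso {V : Type} (G : SimpleGraph V) (red : V → Prop) {W : Type} (H : SimpleGraph W)
    (redH : W → Prop) : Prop :=
  ∃ e : G ≃g H, ∀ v, red v ↔ redH (e v)

/-- The graph obtained from `G` by complementing the cross edges while keeping the
edges inside each color class. -/
def crossComp {V : Type} (G : SimpleGraph V) (red : V → Prop) : SimpleGraph V :=
  SimpleGraph.fromRel (fun u v =>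
    ((red u ↔ red v) ∧ G.Adj u v) ∨ (¬ (red u ↔ red v) ∧ ¬ G.Adj u v))

/-- The blow-up of the 2-colored graph `(H, redH)` (whose red class should be independent),
replacing every red vertex by a copy of `I` forming a clique, joined to the neighbors of the
original vertex. -/
def blowUp {V : Type} (H : SimpleGraph V) (redH : V → Prop) (I : Type) :
    SimpleGraph ({v : V // redH v} × I ⊕ {v : V // ¬ redH v}) :=
  SimpleGraph.fromRel (fun x y =>
    match x, y with
    | Sum.inl (u, i), Sum.inl (u', i') => H.Adj u.1 u'.1 ∨ (u = u' ∧ i ≠ i')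
    | Sum.inl (u, _), Sum.inr b => H.Adj u.1 b.1
    | Sum.inr b, Sum.inl (u, _) => H.Adj b.1 u.1
    | Sum.inr b, Sum.inr b' => H.Adj b.1 b'.1)

/-- The coloring of the blow-up: all vertices replacing red vertices are red. -/
def blowUpRed (V : Type) (redH : V → Prop) (I : Type) :
    ({v : V // redH v} × I ⊕ {v : V // ¬ redH v}) → Prop :=
  Sum.elim (fun _ => True) (fun _ => False)

/-- `(G, red)` is a blow-up with the red class blown up: it is isomorphic (as a colored graph)
to the blow-up of some `(H, redH)` with independent red class by an `i`-clique, `2 ≤ i ≤ ℵ₀`. -/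
def IsBlowUpOf {V : Type} (G : SimpleGraph V) (red : V → Prop) : Prop :=
  ∃ (U : Type) (H : SimpleGraph U) (redH : U → Prop) (I : Type),
    (∀ u v : U, redH u → redH v → ¬ H.Adj u v) ∧
    2 ≤ Cardinal.mk I ∧ Cardinal.mk I ≤ Cardinal.aleph0 ∧
    ∃ e : G ≃g blowUp H redH I, ∀ v, red v ↔ blowUpRed U redH I (e v)

/-- `(G, red)` is a blow-up (of one of its two color classes). -/
def IsBlowUp {V : Type} (G : SimpleGraph V) (red : V → Prop) : Prop :=
  IsBlowUpOf G red ∨ IsBlowUpOf G (fun v => ¬ red v)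

/-- A CUH graph: a countably infinite ultrahomogeneous 2-colored graph in which both
color classes induce disjoint unions of cliques. -/
def IsCUH {V : Type} (G : SimpleGraph V) (red : V → Prop) : Prop :=
  Countable V ∧ Infinite V ∧ Ultrahomogeneous G red ∧
    IsUnionOfCliques G {v | red v} ∧ IsUnionOfCliques G {v | ¬ red v}

/-- A basic CUH graph: a CUH graph which is not a blow-up and where both independence
numbers are at least 2. -/
def IsBasicCUH {V : Type} (G : SimpleGraph V) (red : V → Prop) : Prop :=
  IsCUH G red ∧ ¬ IsBlowUp G red ∧
    (∃ u v, red u ∧ red v ∧ u ≠ v ∧ ¬ G.Adj u v) ∧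
    (∃ u v, ¬ red u ∧ ¬ red v ∧ u ≠ v ∧ ¬ G.Adj u v)

/-- The graph `D`: red vertices `0, 1`, blue vertices `2, 3`, edges
`{01, 23, 02, 03, 12}` (a 2-colored diamond). -/
def Dgraph : SimpleGraph (Fin 4) :=
  SimpleGraph.fromRel (fun x y =>
    (x = 0 ∧ y = 1) ∨ (x = 2 ∧ y = 3) ∨ (x = 0 ∧ y = 2) ∨ (x = 0 ∧ y = 3) ∨ (x = 1 ∧ y = 2))

/-- The coloring of `D` and `D̃`: `0, 1` are red, `2, 3` are blue. -/
def Dred : Fin 4 → Prop := fun x => x = 0 ∨ x = 1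

/-- The graph `D̃`, the cross-edge complement of `D`: the path `0 – 1 – 3 – 2`. -/
def Dtilde : SimpleGraph (Fin 4) :=
  SimpleGraph.fromRel (fun x y => (x = 0 ∧ y = 1) ∨ (x = 1 ∧ y = 3) ∨ (x = 3 ∧ y = 2))

/-- `T_r`: the triangle with two red vertices and one blue vertex. -/
def Tr : SimpleGraph (Fin 3) := ⊤

/-- The coloring of `T_r` and `T̃_r`: `0, 1` red, `2` blue. -/
def TrRed : Fin 3 → Prop := fun x => x = 0 ∨ x = 1

/-- `T̃_r`: a red edge together with an isolated blue vertex. -/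
def TrTilde : SimpleGraph (Fin 3) := SimpleGraph.fromRel (fun x y => x = 0 ∧ y = 1)

/-- `T_b`: the triangle with one red vertex and two blue vertices. -/
def Tb : SimpleGraph (Fin 3) := ⊤

/-- The coloring of `T_b` and `T̃_b`: `0` red, `1, 2` blue. -/
def TbRed : Fin 3 → Prop := fun x => x = 0

/-- `T̃_b`: a blue edge together with an isolated red vertex. -/
def TbTilde : SimpleGraph (Fin 3) := SimpleGraph.fromRel (fun x y => x = 1 ∧ y = 2)

/-!
If any two vertices of a red clique had the same blue neighbors, `G` would be a blow-up; so some
blue vertex splits a red clique, and by homogeneity every blue vertex splits every red clique. In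
fact a blue `b` has infinitely many neighbors and infinitely many nonneighbors in every red clique.
Suppose for instance that it has only finitely many neighbors in each, let `K` and `L` be two red
cliques, and let `a ∈ L` be a neighbor of `b`. Some automorphism fixes `a` and moves the neighbors
of `b` in `K` to nonneighbors of `b` in `K`, so it takes `b` to a blue `c` such that `b` and `c`
have a common neighbor in `L` but none in `K`. But some automorphism fixing `b` and `c` takes `L`
to `K`, since each of `K` and `L` has vertices adjacent to neither `b` nor `c`.

For finite `X ⊆ K`, the size of the blue independent sets completely joined to `X` now grows by
induction. Either every blue clique has a vertex joined to all of `X`, and one chooses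
representatives, or the clique of some blue `b` has none. In the second case choose `Y ⊆ K` of the
size of `X` among the neighbors of `b`: no vertex joined to `X ∪ Y` is in the clique of `b`, so `b`
can be added to any independent set over `X ∪ Y` to give one over `Y`, and homogeneity carries it
back to `X`. The same argument works with nonneighbors in place of neighbors.
-/

section Cliques

variable {V : Type} {G : SimpleGraph V} {P : Set V} {x y z : V}

/-- The vertices of `P` that are equal or adjacent to `x`. If `G` induces a disjoint union of
cliques on `P` and `x ∈ P`, this is the maximal clique of `P` containing `x`. -/
def cliqueOf (G : SimpleGraph V) (P : Set V) (x : V) : Set V :=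
  {y ∈ P | y = x ∨ G.Adj x y}

theorem mem_cliqueOf_self (hx : x ∈ P) : x ∈ cliqueOf G P x :=
  ⟨hx, Or.inl rfl⟩

theorem mem_cliqueOf_symm (hx : x ∈ P) (hy : y ∈ cliqueOf G P x) : x ∈ cliqueOf G P y :=
  ⟨hx, hy.2.imp Eq.symm Adj.symm⟩

theorem adj_iff_mem_cliqueOf (hy : y ∈ P) : G.Adj x y ↔ y ∈ cliqueOf G P x ∧ x ≠ y :=
  ⟨fun h => ⟨⟨hy, Or.inr h⟩, h.ne⟩, fun ⟨h, hxy⟩ => h.2.resolve_left hxy.symm⟩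

theorem IsUnionOfCliques.mem_cliqueOf_trans (hP : IsUnionOfCliques G P) (hx : x ∈ P)
    (hy : y ∈ cliqueOf G P x) (hz : z ∈ cliqueOf G P y) : z ∈ cliqueOf G P x := by
  obtain ⟨hyP, rfl | hxy⟩ := hy
  · exact hz
  obtain ⟨hzP, rfl | hyz⟩ := hz
  · exact ⟨hyP, Or.inr hxy⟩
  · exact ⟨hzP, or_iff_not_imp_left.2 fun hzx => hP x hx y hyP z hzP hxy hyz (Ne.symm hzx)⟩

theorem IsUnionOfCliques.ne_and_not_adj_of_notMem_cliqueOf (hP : IsUnionOfCliques G P)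
    (hx : x ∈ P) (hy : y ∈ P) (hyx : y ∉ cliqueOf G P x) (hz : z ∈ cliqueOf G P x) :
    y ≠ z ∧ ¬ G.Adj y z :=
  ⟨fun h => hyx (h ▸ hz), fun h => hyx (hP.mem_cliqueOf_trans hx hz ⟨hy, Or.inr h.symm⟩)⟩

theorem IsUnionOfCliques.cliqueOf_eq (hP : IsUnionOfCliques G P) (hx : x ∈ P)
    (hy : y ∈ cliqueOf G P x) : cliqueOf G P y = cliqueOf G P x :=
  Set.Subset.antisymm (fun _ hz => hP.mem_cliqueOf_trans hx hy hz) fun _ hz =>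
    hP.mem_cliqueOf_trans hy.1 (mem_cliqueOf_symm hx hy) hz

theorem IsUnionOfCliques.isClique_cliqueOf (hP : IsUnionOfCliques G P) (hx : x ∈ P) :
    G.IsClique (cliqueOf G P x) := by
  intro y hy z hz hyz
  have hzy : z ∈ cliqueOf G P y := hP.mem_cliqueOf_trans hy.1 (mem_cliqueOf_symm hx hy) hz
  exact (adj_iff_mem_cliqueOf hz.1).2 ⟨hzy, hyz⟩

theorem IsUnionOfCliques.isMaxCliqueIn_cliqueOf (hP : IsUnionOfCliques G P) (hx : x ∈ P) :
    IsMaxCliqueIn G P (cliqueOf G P x) := by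
  refine ⟨fun y hy => hy.1, hP.isClique_cliqueOf hx, fun M hMP hM hsub => hsub.antisymm ?_⟩
  intro y hy
  exact ⟨hMP hy, or_iff_not_imp_left.2 fun hyx =>
    hM (hsub (mem_cliqueOf_self hx)) hy (Ne.symm hyx)⟩

theorem map_mem_cliqueOf_iff {ψ : G ≃g G} (hψ : ∀ v, ψ v ∈ P ↔ v ∈ P) :
    ψ y ∈ cliqueOf G P (ψ x) ↔ y ∈ cliqueOf G P x := by
  simp only [cliqueOf, Set.mem_ofPred_eq, hψ, ψ.injective.eq_iff, ψ.map_adj_iff]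

/-- Being in the same maximal clique, as an equivalence relation on `P`. -/
def IsUnionOfCliques.setoid (hP : IsUnionOfCliques G P) : Setoid P where
  r x y := (y : V) ∈ cliqueOf G P x
  iseqv :=
    ⟨fun x => mem_cliqueOf_self x.2, fun {x _} h => mem_cliqueOf_symm x.2 h,
      fun {x _ _} h₁ h₂ => hP.mem_cliqueOf_trans x.2 h₁ h₂⟩

end Cliques

section BlowUp

variable {U : Type} {H : SimpleGraph U} {redH : U → Prop} {I : Type}

theorem blowUp_adj_inl_inl (hH : ∀ u v, redH u → redH v → ¬ H.Adj u v) {u v : {v : U // redH v}}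
    {i j : I} : (blowUp H redH I).Adj (Sum.inl (u, i)) (Sum.inl (v, j)) ↔ u = v ∧ i ≠ j := by
  simp only [blowUp, fromRel_adj, hH u v u.2 v.2, hH v u v.2 u.2, false_or]
  grind

theorem blowUp_adj_inl_inr {u : {v : U // redH v}} {b : {v : U // ¬ redH v}} {i : I} :
    (blowUp H redH I).Adj (Sum.inl (u, i)) (Sum.inr b) ↔ H.Adj u b := by
  simp [blowUp, H.adj_comm]

theorem blowUp_adj_inr_inr {b c : {v : U // ¬ redH v}} :
    (blowUp H redH I).Adj (Sum.inr b) (Sum.inr c) ↔ H.Adj b c := by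
  simp only [blowUp, fromRel_adj, H.adj_comm c b, or_self, ne_eq, Sum.inr.injEq,
    and_iff_right_iff_imp]
  rintro h rfl
  exact h.ne rfl

variable {V : Type} {G : SimpleGraph V} {red : V → Prop} {Q B : Type}

theorem isBlowUpOf_of_equiv (hI : 2 ≤ Cardinal.mk I) (hI' : Cardinal.mk I ≤ Cardinal.aleph0)
    (e : V ≃ Q × I ⊕ B) (hred : ∀ v, red v ↔ (e v).isLeft)
    (hinl : ∀ p p', G.Adj (e.symm (Sum.inl p)) (e.symm (Sum.inl p')) ↔ p.1 = p'.1 ∧ p.2 ≠ p'.2)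
    (hcross : ∀ q i j b, G.Adj (e.symm (Sum.inl (q, i))) (e.symm (Sum.inr b)) →
      G.Adj (e.symm (Sum.inl (q, j))) (e.symm (Sum.inr b))) :
    IsBlowUpOf G red := by
  obtain ⟨i₀⟩ : Nonempty I := Cardinal.mk_ne_zero_iff.1 (two_pos.trans_le hI).ne'
  let H : SimpleGraph (Q ⊕ B) := G.comap (e.symm ∘ Sum.map (fun q => (q, i₀)) id)
  have hH : ∀ u v : Q ⊕ B, u.isLeft → v.isLeft → ¬ H.Adj u v := by
    rintro (p | b) (q | c) hu hv
    · exact fun h => ((hinl (p, i₀) (q, i₀)).1 h).2 rfl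
    all_goals simp at hu hv
  let e' : Q × I ⊕ B ≃ {u : Q ⊕ B // u.isLeft} × I ⊕ {u : Q ⊕ B // ¬ u.isLeft} :=
    Equiv.sumCongr (Equiv.prodCongr Equiv.sumIsLeft.symm (Equiv.refl I))
      (Equiv.sumIsRight.symm.trans (Equiv.subtypeEquivRight (by simp)))
  have hadj : ∀ q i b, (blowUp H (fun u => u.isLeft) I).Adj (e' (Sum.inl (q, i))) (e' (Sum.inr b)) ↔
      G.Adj (e.symm (Sum.inl (q, i))) (e.symm (Sum.inr b)) := fun q i b =>
    blowUp_adj_inl_inr.trans ⟨hcross q i₀ i b, hcross q i i₀ b⟩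
  refine ⟨Q ⊕ B, H, fun u => u.isLeft, I, hH, hI, hI', ⟨e.trans e', fun {u v} => ?_⟩, fun v => ?_⟩
  · obtain ⟨x, rfl⟩ := e.symm.surjective u
    obtain ⟨y, rfl⟩ := e.symm.surjective v
    simp only [Equiv.trans_apply, Equiv.apply_symm_apply]
    rcases x with ⟨p, i⟩ | b <;> rcases y with ⟨q, j⟩ | c
    · rw [hinl, ← Equiv.sumIsLeft.symm.injective.eq_iff]
      exact blowUp_adj_inl_inl hH
    · exact hadj p i c
    · rw [adj_comm, G.adj_comm]
      exact hadj q j b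
    · exact blowUp_adj_inr_inr
  · rw [hred]
    change _ ↔ blowUpRed _ _ I (e' (e v))
    rcases e v with p | b
    · exact iff_of_true rfl trivial
    · exact iff_of_false (by simp) id

theorem IsUnionOfCliques.exists_equiv_prod {P : Set V} (hP : IsUnionOfCliques G P)
    (hcard : ∀ x ∈ P, Cardinal.mk (cliqueOf G P x) = Cardinal.mk I) :
    ∃ (Q : Type) (π : P ≃ Q × I),
      ∀ u v : P, (π u).1 = (π v).1 ↔ v.1 ∈ cliqueOf G P u := by
  have hfiber : ∀ q : Quotient hP.setoid, Nonempty ({v // Quotient.mk hP.setoid v = q} ≃ I) := by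
    rintro ⟨x⟩
    refine Cardinal.eq.1 (Eq.trans (Cardinal.mk_congr ?_) (hcard x x.2))
    exact
      { toFun v := ⟨v.1, Quotient.exact v.2.symm⟩
        invFun y := ⟨⟨y, y.2.1⟩, (Quotient.sound (s := hP.setoid) y.2).symm⟩ }
  exact ⟨Quotient hP.setoid, (Equiv.sigmaFiberEquiv (Quotient.mk hP.setoid)).symm.trans
    (Equiv.sigmaEquivProdOfEquiv fun q => (hfiber q).some), fun u v => Quotient.eq⟩

theorem isBlowUpOf_of_twins (hR : IsUnionOfCliques G {v | red v}) (hI : 2 ≤ Cardinal.mk I)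
    (hI' : Cardinal.mk I ≤ Cardinal.aleph0)
    (hcard : ∀ x, red x → Cardinal.mk (cliqueOf G {v | red v} x) = Cardinal.mk I)
    (htwins : ∀ x y b, red x → red y → ¬ red b → G.Adj x y → G.Adj x b → G.Adj y b) :
    IsBlowUpOf G red := by
  classical
  obtain ⟨Q, π, hπ⟩ := hR.exists_equiv_prod hcard
  let e : V ≃ Q × I ⊕ {v // ¬ red v} :=
    (Equiv.sumCompl red).symm.trans (Equiv.sumCongr π (Equiv.refl _))
  have he_inl : ∀ p, e.symm (Sum.inl p) = π.symm p := fun p => rfl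
  have hmem : ∀ p q : Q × I, p.1 = q.1 ↔ (π.symm q).1 ∈ cliqueOf G {v | red v} (π.symm p) := by
    intro p q
    rw [← hπ, π.apply_symm_apply, π.apply_symm_apply]
  refine isBlowUpOf_of_equiv hI hI' e (fun v => ?_) (fun p q => ?_) (fun q i j b h => ?_)
  · by_cases hv : red v <;> simp [e, hv]
  · rw [he_inl, he_inl, adj_iff_mem_cliqueOf (π.symm q).2, ← hmem]
    refine and_congr_right fun hpq => not_congr ?_
    rw [Subtype.coe_inj, π.symm.injective.eq_iff, Prod.ext_iff, and_iff_right hpq]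
  · have hj := (hmem (q, i) (q, j)).1 rfl
    rcases hj.2 with hij | hij
    · rw [he_inl, hij]
      exact h
    · exact htwins _ _ b (π.symm (q, i)).2 (π.symm (q, j)).2 b.2 hij h

theorem exists_blue_splitting_red_edge (hR : IsUnionOfCliques G {v | red v})
    (hI : 2 ≤ Cardinal.mk I) (hI' : Cardinal.mk I ≤ Cardinal.aleph0)
    (hcard : ∀ x, red x → Cardinal.mk (cliqueOf G {v | red v} x) = Cardinal.mk I)
    (hnb : ¬ IsBlowUpOf G red) :
    ∃ s t b, red s ∧ red t ∧ ¬ red b ∧ G.Adj s t ∧ G.Adj s b ∧ ¬ G.Adj t b := by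
  by_contra! h
  exact hnb (isBlowUpOf_of_twins hR hI hI' hcard h)

end BlowUp

section Homogeneity

variable {V : Type} {G : SimpleGraph V} {red : V → Prop}

theorem Ultrahomogeneous.exists_aut (hU : Ultrahomogeneous G red) {ι : Type*} [Finite ι]
    {p q : ι → V} (heq : ∀ i j, p i = p j ↔ q i = q j) (hred : ∀ i, red (q i) ↔ red (p i))
    (hadj : ∀ i j, G.Adj (q i) (q j) ↔ G.Adj (p i) (p j)) :
    ∃ ψ : G ≃g G, (∀ v, red (ψ v) ↔ red v) ∧ ∀ i, ψ (p i) = q i := by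
  have hf : ∀ i, Function.extend p q id (p i) = q i :=
    Function.FactorsThrough.extend_apply (fun i j h => (heq i j).1 h) id
  obtain ⟨ψ, hψ, hψp⟩ := hU (Set.range p) (Set.finite_range p) (Function.extend p q id) (by
    simp only [IsPartialIso, Set.InjOn, Set.forall_mem_range, hf]
    exact ⟨fun i j h => (heq i j).2 h, hred, hadj⟩)
  exact ⟨ψ, hψ, fun i => (hψp _ ⟨i, rfl⟩).trans (hf i)⟩

theorem Ultrahomogeneous.exists_aut_cross_pair (hU : Ultrahomogeneous G red) {y y' b b' : V}
    (hy : red y) (hy' : red y') (hb : ¬ red b) (hb' : ¬ red b')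
    (h : G.Adj y b ↔ G.Adj y' b') :
    ∃ ψ : G ≃g G, (∀ v, red (ψ v) ↔ red v) ∧ ψ y = y' ∧ ψ b = b' := by
  have hyb : y ≠ b := ne_of_apply_ne red (by simp [hy, hb])
  have hyb' : y' ≠ b' := ne_of_apply_ne red (by simp [hy', hb'])
  simpa [Fin.forall_fin_two] using hU.exists_aut (p := ![y, b]) (q := ![y', b'])
    (by simp [Fin.forall_fin_two, hyb, hyb', hyb.symm, hyb'.symm])
    (by simp [Fin.forall_fin_two, hy, hy', hb, hb'])
    (by simp [Fin.forall_fin_two, h, G.adj_comm b, G.adj_comm b'])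

theorem Ultrahomogeneous.exists_aut_fixing_blue_pair (hU : Ultrahomogeneous G red) {y y' b c : V}
    (hy : red y) (hy' : red y') (hb : ¬ red b) (hc : ¬ red c)
    (h : G.Adj y b ↔ G.Adj y' b) (h' : G.Adj y c ↔ G.Adj y' c) :
    ∃ ψ : G ≃g G, (∀ v, red (ψ v) ↔ red v) ∧ ψ y = y' ∧ ψ b = b ∧ ψ c = c := by
  have hne : ∀ u v, red u → ¬ red v → u ≠ v ∧ v ≠ u := by grind
  simpa [Fin.forall_fin_succ] using hU.exists_aut (p := ![y, b, c]) (q := ![y', b, c])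
    (by simp [Fin.forall_fin_succ, hne, hy, hy', hb, hc])
    (by simp [Fin.forall_fin_succ, hy, hy'])
    (by simp [Fin.forall_fin_succ, h, h', G.adj_comm b, G.adj_comm c])

theorem Ultrahomogeneous.exists_aut_map_clique (hU : Ultrahomogeneous G red)
    (hR : IsUnionOfCliques G {v | red v}) {x a : V} (hx : red x) (ha : red a)
    (hax : a ∉ cliqueOf G {v | red v} x) {A : Set V} [Finite A]
    (hA : A ⊆ cliqueOf G {v | red v} x) (f : A ↪ cliqueOf G {v | red v} x) :
    ∃ ψ : G ≃g G, (∀ v, red (ψ v) ↔ red v) ∧ ψ a = a ∧ ∀ y : A, ψ y = f y := by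
  have hne : ∀ y ∈ cliqueOf G {v | red v} x, a ≠ y := fun y hy =>
    (hR.ne_and_not_adj_of_notMem_cliqueOf hx ha hax hy).1
  have hadj : ∀ y ∈ cliqueOf G {v | red v} x, ¬ G.Adj a y := fun y hy =>
    (hR.ne_and_not_adj_of_notMem_cliqueOf hx ha hax hy).2
  have hK : ∀ y ∈ cliqueOf G {v | red v} x, ∀ z ∈ cliqueOf G {v | red v} x,
      (G.Adj y z ↔ y ≠ z) := fun y hy z hz => ⟨fun h => h.ne, hR.isClique_cliqueOf hx hy hz⟩
  obtain ⟨ψ, hψ, hψp⟩ := hU.exists_aut (p := fun i : Option A => i.elim a Subtype.val)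
    (q := fun i => i.elim a fun y => f y)
    (by
      rintro (_ | u) (_ | v)
      · simp
      · simp [hne _ (hA v.2), hne _ (f v).2]
      · simp [(hne _ (hA u.2)).symm, (hne _ (f u).2).symm]
      · simp [Subtype.coe_inj])
    (by
      rintro (_ | u)
      · rfl
      · exact iff_of_true (f u).2.1 (hA u.2).1)
    (by
      rintro (_ | u) (_ | v)
      · rfl
      · simp [hadj _ (hA v.2), hadj _ (f v).2]
      · simp [G.adj_comm _ a, hadj _ (hA u.2), hadj _ (f u).2]
      · simp [hK _ (f u).2 _ (f v).2, hK _ (hA u.2) _ (hA v.2), Subtype.coe_inj])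
  exact ⟨ψ, hψ, hψp none, fun y => hψp (some y)⟩

end Homogeneity

section Trace

variable {V : Type} {G : SimpleGraph V} {red : V → Prop} {ε : Prop} {x y b : V}

/-- The neighbors of `b` in the red clique of `x` if `ε` holds, and its nonneighbors there if `ε`
fails. The truth value `ε` treats a pattern and its cross-edge complement simultaneously. -/
def redTrace (G : SimpleGraph V) (red : V → Prop) (ε : Prop) (x b : V) : Set V :=
  {y ∈ cliqueOf G {v | red v} x | G.Adj y b ↔ ε}

theorem map_mem_redTrace_iff {ψ : G ≃g G} (hψ : ∀ v, red (ψ v) ↔ red v) :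
    ψ y ∈ redTrace G red ε (ψ x) (ψ b) ↔ y ∈ redTrace G red ε x b := by
  simp only [redTrace, Set.mem_ofPred_eq, map_mem_cliqueOf_iff (P := {v | red v}) hψ, ψ.map_adj_iff]

theorem IsUnionOfCliques.redTrace_eq (hR : IsUnionOfCliques G {v | red v}) (hx : red x)
    (hy : y ∈ cliqueOf G {v | red v} x) : redTrace G red ε y b = redTrace G red ε x b := by
  simp only [redTrace, hR.cliqueOf_eq hx hy]

theorem redTrace_nonempty (hU : Ultrahomogeneous G red) {s t b₀ : V} (hs : red s) (ht : red t)
    (hb₀ : ¬ red b₀) (hst : G.Adj s t) (hsb₀ : G.Adj s b₀) (htb₀ : ¬ G.Adj t b₀)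
    (hx : red x) (hb : ¬ red b) : (redTrace G red ε x b).Nonempty := by
  by_cases hxb : G.Adj x b ↔ ε
  · exact ⟨x, mem_cliqueOf_self hx, hxb⟩
  obtain ⟨s', t', hs', ht', hst', hs'b₀, ht'b₀⟩ : ∃ s' t', red s' ∧ red t' ∧ G.Adj s' t' ∧
      (G.Adj s' b₀ ↔ G.Adj x b) ∧ (G.Adj t' b₀ ↔ ε) := by
    by_cases h : G.Adj x b
    · exact ⟨s, t, hs, ht, hst, by tauto, by tauto⟩
    · exact ⟨t, s, ht, hs, hst.symm, by tauto, by tauto⟩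
  obtain ⟨ψ, hψ, rfl, rfl⟩ := hU.exists_aut_cross_pair hs' hx hb₀ hb hs'b₀
  exact ⟨ψ t', (map_mem_redTrace_iff hψ).2 ⟨⟨ht', Or.inr hst'⟩, ht'b₀⟩⟩

theorem finite_redTrace_of_finite (hU : Ultrahomogeneous G red)
    (hR : IsUnionOfCliques G {v | red v})
    (hne : ∀ x b, red x → ¬ red b → (redTrace G red ε x b).Nonempty)
    (hx : red x) (hb : ¬ red b) (hfin : (redTrace G red ε x b).Finite) {z c : V}
    (hz : red z) (hc : ¬ red c) : (redTrace G red ε z c).Finite := by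
  obtain ⟨a, haK, hab⟩ := hne x b hx hb
  obtain ⟨a', haK', hac'⟩ := hne z c hz hc
  obtain ⟨ψ, hψ, rfl, rfl⟩ := hU.exists_aut_cross_pair haK'.1 haK.1 hc hb (hac'.trans hab.symm)
  rw [← hR.redTrace_eq hx haK] at hfin
  rw [← hR.redTrace_eq hz haK']
  exact Set.Finite.of_finite_image (hfin.subset (Set.image_subset_iff.2 fun y hy =>
    (map_mem_redTrace_iff hψ).2 hy)) ψ.injective.injOn

theorem exists_blue_disjoint_redTrace (hU : Ultrahomogeneous G red)
    (hR : IsUnionOfCliques G {v | red v}) (hx : red x)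
    (hinf : (cliqueOf G {v | red v} x).Infinite) {a : V} (ha : red a)
    (hax : a ∉ cliqueOf G {v | red v} x) (hb : ¬ red b)
    (hfin : (redTrace G red ε x b).Finite) :
    ∃ c, ¬ red c ∧ (G.Adj a c ↔ G.Adj a b) ∧
      Disjoint (redTrace G red ε x b) (redTrace G red ε x c) := by
  have : Finite (redTrace G red ε x b) := hfin
  let f : redTrace G red ε x b ↪ ↥(cliqueOf G {v | red v} x \ redTrace G red ε x b) :=
    (nonempty_embedding_nat _).some.trans ((hinf.sdiff hfin).natEmbedding _)
  obtain ⟨ψ, hψ, hψa, hψf⟩ := hU.exists_aut_map_clique hR hx ha hax (fun y hy => hy.1)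
    (f.trans (Function.Embedding.subtypeMap (.refl V) fun y hy => hy.1))
  refine ⟨ψ b, (hψ b).not.2 hb, ?_, Set.disjoint_left.2 fun y hyb hyψb => ?_⟩
  · conv_lhs => rw [← hψa]
    exact ψ.map_adj_iff
  · obtain ⟨w, rfl⟩ := ψ.surjective y
    have hfy := hψf ⟨_, hyb⟩
    rw [← hR.redTrace_eq hx (hfy ▸ (f ⟨_, hyb⟩).2.1), map_mem_redTrace_iff hψ,
      hR.redTrace_eq hx hyb.1] at hyψb
    exact (f ⟨w, hyψb⟩).2.2 (hψf ⟨w, hyψb⟩ ▸ hyb)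

theorem redTrace_infinite (hU : Ultrahomogeneous G red)
    (hR : IsUnionOfCliques G {v | red v})
    (hinf : ∀ x, red x → (cliqueOf G {v | red v} x).Infinite)
    (hα : ∃ u v, red u ∧ red v ∧ u ≠ v ∧ ¬ G.Adj u v)
    (hne : ∀ x b, red x → ¬ red b → (redTrace G red ε x b).Nonempty)
    (hx : red x) (hb : ¬ red b) : (redTrace G red ε x b).Infinite := by
  intro hfin
  replace hfin : ∀ z c, red z → ¬ red c → (redTrace G red ε z c).Finite := fun z c hz hc =>
    finite_redTrace_of_finite hU hR hne hx hb hfin hz hc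
  obtain ⟨u, v, hu, hv, huv, hadj⟩ := hα
  have huv' : u ∉ cliqueOf G {v | red v} v := fun h =>
    hadj ((adj_iff_mem_cliqueOf hu).2 ⟨h, huv.symm⟩).symm
  obtain ⟨a, haK, hab⟩ := hne u b hu hb
  obtain ⟨c, hc, hac, hdisj⟩ := exists_blue_disjoint_redTrace hU hR hv (hinf v hv) haK.1
    (fun h => huv' (hR.mem_cliqueOf_trans hv h (mem_cliqueOf_symm hu haK))) hb (hfin v b hv hb)
  have houtside : ∀ z, red z → ∃ y ∈ cliqueOf G {v | red v} z,
      y ∉ redTrace G red ε z b ∧ y ∉ redTrace G red ε z c := by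
    intro z hz
    obtain ⟨y, hy, hyT⟩ := ((hinf z hz).sdiff ((hfin z b hz hb).union (hfin z c hz hc))).nonempty
    exact ⟨y, hy, not_or.1 hyT⟩
  obtain ⟨y, hyK, hyb, hyc⟩ := houtside u hu
  obtain ⟨y', hyK', hyb', hyc'⟩ := houtside v hv
  simp only [redTrace, Set.mem_ofPred_eq, hyK, hyK', true_and] at hyb hyc hyb' hyc'
  obtain ⟨χ, hχ, rfl, hχb, hχc⟩ := hU.exists_aut_fixing_blue_pair hyK.1 hyK'.1 hb hc
    (by tauto) (by tauto)
  have hay : a ∈ cliqueOf G {v | red v} y := (hR.cliqueOf_eq hu hyK).symm ▸ haK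
  have hb_mem : χ a ∈ redTrace G red ε v b := by
    rw [← hR.redTrace_eq hv hyK', ← hχb]
    exact (map_mem_redTrace_iff hχ).2 ⟨hay, hab⟩
  have hc_mem : χ a ∈ redTrace G red ε v c := by
    rw [← hR.redTrace_eq hv hyK', ← hχc]
    exact (map_mem_redTrace_iff hχ).2 ⟨hay, hac.trans hab⟩
  exact Set.disjoint_left.1 hdisj hb_mem hc_mem

end Trace

section BlueIndependent

variable {V : Type} {G : SimpleGraph V} {red : V → Prop} {ε : Prop} {X Y S : Finset V} {b x : V}

/-- `S` is a blue independent set, and all cross edges between `X` and `S` are present if `ε` holds,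
absent if `ε` fails. -/
structure IsBlueIndepOver (G : SimpleGraph V) (red : V → Prop) (ε : Prop) (X S : Finset V) :
    Prop where
  blue : ∀ v ∈ S, ¬ red v
  indep : IsIndepIn G S
  adj_iff : ∀ u ∈ X, ∀ v ∈ S, (G.Adj u v ↔ ε)

namespace IsBlueIndepOver

theorem mono (h : IsBlueIndepOver G red ε Y S) (hXY : X ⊆ Y) : IsBlueIndepOver G red ε X S :=
  ⟨h.blue, h.indep, fun u hu => h.adj_iff u (hXY hu)⟩

theorem map (h : IsBlueIndepOver G red ε X S) {ψ : G ≃g G} (hψ : ∀ v, red (ψ v) ↔ red v) :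
    IsBlueIndepOver G red ε (X.map ψ.toEquiv.toEmbedding) (S.map ψ.toEquiv.toEmbedding) where
  blue := Finset.forall_mem_map.2 fun v hv => (hψ v).not.2 (h.blue v hv)
  indep := Finset.forall_mem_map.2 fun u hu => Finset.forall_mem_map.2 fun v hv =>
    ψ.map_adj_iff.not.2 (h.indep u hu v hv)
  adj_iff := Finset.forall_mem_map.2 fun u hu => Finset.forall_mem_map.2 fun v hv =>
    ψ.map_adj_iff.trans (h.adj_iff u hu v hv)

theorem insert [DecidableEq V] (h : IsBlueIndepOver G red ε X S) (hb : ¬ red b)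
    (hbS : ∀ v ∈ S, ¬ G.Adj b v) (hbX : ∀ u ∈ X, (G.Adj u b ↔ ε)) :
    IsBlueIndepOver G red ε X (insert b S) where
  blue := by simpa [hb] using h.blue
  indep := by
    simp only [IsIndepIn, Finset.coe_insert, Set.forall_mem_insert, G.irrefl, not_false_eq_true,
      true_and]
    exact ⟨hbS, fun u hu => ⟨fun huv => hbS u hu huv.symm, h.indep u hu⟩⟩
  adj_iff u hu := by simpa [hbX u hu] using h.adj_iff u hu

theorem exists_of_card_eq (hU : Ultrahomogeneous G red) (hX : G.IsClique X) (hXr : ∀ v ∈ X, red v)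
    (hY : G.IsClique Y) (hYr : ∀ v ∈ Y, red v) (hXY : X.card = Y.card)
    (h : IsBlueIndepOver G red ε X S) :
    ∃ T : Finset V, T.card = S.card ∧ IsBlueIndepOver G red ε Y T := by
  let e : X ≃ Y := Finset.equivOfCardEq hXY
  have hadj {Z : Finset V} (hZ : G.IsClique Z) (u v : Z) : G.Adj u v ↔ u ≠ v :=
    ⟨fun h huv => h.ne (congrArg _ huv), fun h => hZ u.2 v.2 (Subtype.coe_ne_coe.2 h)⟩
  obtain ⟨ψ, hψ, hψe⟩ := hU.exists_aut (p := fun u : X => (u : V)) (q := fun u => (e u : V))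
    (by simp) (fun u => iff_of_true (hYr _ (e u).2) (hXr _ u.2))
    (fun u v => by rw [hadj hX, hadj hY, e.injective.ne_iff])
  refine ⟨S.map ψ.toEquiv.toEmbedding, Finset.card_map _, (h.map hψ).mono fun y hy => ?_⟩
  exact Finset.mem_map.2 ⟨e.symm ⟨y, hy⟩, (e.symm ⟨y, hy⟩).2, by simpa using hψe (e.symm ⟨y, hy⟩)⟩

end IsBlueIndepOver

theorem exists_isBlueIndepOver_of_forall_meets (hB : IsUnionOfCliques G {v | ¬ red v})
    (hmeet : ∀ s, ¬ red s → ∃ t ∈ cliqueOf G {v | ¬ red v} s, ∀ u ∈ X, (G.Adj u t ↔ ε))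
    (hS : ∀ v ∈ S, ¬ red v) (hSi : IsIndepIn G S) :
    ∃ T : Finset V, T.card = S.card ∧ IsBlueIndepOver G red ε X T := by
  classical
  choose! f hf hfX using hmeet
  have hclique : ∀ s ∈ S, ∀ t ∈ S, f t ∈ cliqueOf G {v | ¬ red v} (f s) → s = t := by
    intro s hs t ht hst
    have hst' : t ∈ cliqueOf G {v | ¬ red v} s :=
      hB.mem_cliqueOf_trans (hS s hs) (hB.mem_cliqueOf_trans (hS s hs) (hf s (hS s hs)) hst)
        (mem_cliqueOf_symm (hS t ht) (hf t (hS t ht)))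
    by_contra hne
    exact hSi s hs t ht ((adj_iff_mem_cliqueOf (hS t ht)).2 ⟨hst', hne⟩)
  have hblue : ∀ s ∈ S, ¬ red (f s) := fun s hs => (hf s (hS s hs)).1
  have hinj : Set.InjOn f S := fun s hs t ht hst =>
    hclique s hs t ht (hst ▸ mem_cliqueOf_self (hblue s hs))
  refine ⟨S.image f, Finset.card_image_of_injOn hinj, ?_, ?_, ?_⟩
  · simpa using hblue
  · simp only [IsIndepIn, Finset.coe_image, Set.forall_mem_image]
    intro s hs t ht hadj
    have hst := hclique s hs t ht ⟨hblue t ht, Or.inr hadj⟩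
    exact hadj.ne (congrArg f hst)
  · simpa using fun u hu s hs => hfX s (hS s hs) u hu

theorem exists_isBlueIndepOver_insert (hU : Ultrahomogeneous G red)
    (hR : IsUnionOfCliques G {v | red v}) (hx : red x) (hb : ¬ red b)
    (hinf : (redTrace G red ε x b).Infinite) (hX : ↑X ⊆ cliqueOf G {v | red v} x)
    (hmiss : ∀ t ∈ cliqueOf G {v | ¬ red v} b, ∃ u ∈ X, ¬ (G.Adj u t ↔ ε)) {k : ℕ}
    (hk : ∀ Y : Finset V, ↑Y ⊆ cliqueOf G {v | red v} x →
      ∃ T : Finset V, T.card = k ∧ IsBlueIndepOver G red ε Y T) :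
    ∃ T : Finset V, T.card = k + 1 ∧ IsBlueIndepOver G red ε X T := by
  classical
  obtain ⟨Y, hYtrace, hYcard⟩ := hinf.exists_subset_card_eq X.card
  have hY : ↑Y ⊆ cliqueOf G {v | red v} x := fun y hy => (hYtrace hy).1
  obtain ⟨T, rfl, hT⟩ := hk (X ∪ Y) (by simpa using ⟨hX, hY⟩)
  have hTb : ∀ t ∈ T, t ∉ cliqueOf G {v | ¬ red v} b := fun t ht htb => by
    obtain ⟨u, hu, hut⟩ := hmiss t htb
    exact hut (hT.adj_iff u (Finset.mem_union_left _ hu) t ht)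
  have hbT : b ∉ T := fun h => hTb b h (mem_cliqueOf_self hb)
  have hYT : IsBlueIndepOver G red ε Y (insert b T) :=
    (hT.mono Finset.subset_union_right).insert hb
      (fun t ht hbt => hTb t ht ⟨hT.blue t ht, Or.inr hbt⟩) (fun u hu => (hYtrace hu).2)
  have hclique := hR.isClique_cliqueOf hx
  rw [← Finset.card_insert_of_notMem hbT]
  exact hYT.exists_of_card_eq hU (hclique.subset hY) (fun v hv => (hY hv).1)
    (hclique.subset hX) (fun v hv => (hX hv).1) hYcard

theorem exists_isBlueIndepOver (hU : Ultrahomogeneous G red)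
    (hR : IsUnionOfCliques G {v | red v}) (hB : IsUnionOfCliques G {v | ¬ red v}) (hx : red x)
    (hinf : ∀ b, ¬ red b → (redTrace G red ε x b).Infinite)
    (hS : ∀ v ∈ S, ¬ red v) (hSi : IsIndepIn G S) (hX : ↑X ⊆ cliqueOf G {v | red v} x) :
    ∃ T : Finset V, T.card = S.card ∧ IsBlueIndepOver G red ε X T := by
  classical
  induction S using Finset.induction_on generalizing X with
  | empty => exact ⟨∅, rfl, by simp, by simp [IsIndepIn], by simp⟩
  | insert s S hs ih =>
    by_cases hmeet : ∀ b, ¬ red b → ∃ t ∈ cliqueOf G {v | ¬ red v} b, ∀ u ∈ X, (G.Adj u t ↔ ε)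
    · exact exists_isBlueIndepOver_of_forall_meets hB hmeet hS hSi
    · push Not at hmeet
      obtain ⟨b, hb, hmiss⟩ := hmeet
      rw [Finset.card_insert_of_notMem hs]
      refine exists_isBlueIndepOver_insert hU hR hx hb (hinf b hb) hX
        (fun t ht => (hmiss t ht).imp fun u hu => ⟨hu.1, by tauto⟩) fun Y hY => ih
          (fun v hv => hS v (Finset.mem_insert_of_mem hv))
          (fun u hu v hv => hSi u (Finset.mem_insert_of_mem hu) v (Finset.mem_insert_of_mem hv)) hY

end BlueIndependent

theorem stmt_13_general {V : Type} {G : SimpleGraph V} {red : V → Prop}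
    (hU : Ultrahomogeneous G red) (hR : IsUnionOfCliques G {v | red v})
    (hB : IsUnionOfCliques G {v | ¬ red v}) (hnb : ¬ IsBlowUpOf G red)
    (hα : ∃ u v, red u ∧ red v ∧ u ≠ v ∧ ¬ G.Adj u v)
    (hωR : ∀ M : Set V, IsMaxCliqueIn G {v | red v} M → Cardinal.mk M = Cardinal.aleph0)
    (ε : Prop) (r k : ℕ) (hk : ∃ S : Finset V, S.card = k ∧ (∀ v ∈ S, ¬ red v) ∧
      (∀ u ∈ S, ∀ v ∈ S, ¬ G.Adj u v)) :
    ∃ C S : Finset V, C.card = r ∧ S.card = k ∧ (∀ v ∈ C, red v) ∧ (∀ v ∈ S, ¬ red v) ∧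
      (∀ u ∈ C, ∀ v ∈ C, u ≠ v → G.Adj u v) ∧ (∀ u ∈ S, ∀ v ∈ S, ¬ G.Adj u v) ∧
      (∀ u ∈ C, ∀ v ∈ S, (G.Adj u v ↔ ε)) := by
  have hcard : ∀ x, red x → Cardinal.mk (cliqueOf G {v | red v} x) = Cardinal.mk ℕ :=
    fun x hx => (hωR _ (hR.isMaxCliqueIn_cliqueOf hx)).trans Cardinal.mk_nat.symm
  have hinf : ∀ x, red x → (cliqueOf G {v | red v} x).Infinite := fun x hx =>
    Set.infinite_coe_iff.1 (Cardinal.infinite_iff.2 ((hcard x hx).trans Cardinal.mk_nat).ge)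
  obtain ⟨s, t, b₀, hs, ht, hb₀, hst, hsb₀, htb₀⟩ :=
    exists_blue_splitting_red_edge hR (by simp) Cardinal.mk_nat.le hcard hnb
  have htrace : ∀ x b, red x → ¬ red b → (redTrace G red ε x b).Infinite := fun x b =>
    redTrace_infinite hU hR hinf hα fun x b => redTrace_nonempty hU hs ht hb₀ hst hsb₀ htb₀
  obtain ⟨C, hC, rfl⟩ := (hinf s hs).exists_subset_card_eq r
  obtain ⟨S, rfl, hS, hSi⟩ := hk
  obtain ⟨T, hT, hCT⟩ := exists_isBlueIndepOver hU hR hB hs (fun b => htrace s b hs) hS hSi hC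
  exact ⟨C, T, rfl, hT, fun v hv => (hC hv).1, hCT.blue,
    (hR.isClique_cliqueOf hs).subset hC, hCT.indep, hCT.adj_iff⟩

/-- in a basic CUH graph omitting `D` with a non-independent color class and
ω_R = ℵ₀, for all naturals `r` and `k ≤ α_B`, the join of a red `r`-clique with a blue
independent `k`-set, and their disjoint union, are both realized. -/
theorem stmt_13 {V : Type} (G : SimpleGraph V) (red : V → Prop)
    (hG : IsBasicCUH G red)
    (hOmD : ¬ Realizes G red Dgraph Dred)
    (hni : (∃ u v, red u ∧ red v ∧ G.Adj u v) ∨ (∃ u v, ¬ red u ∧ ¬ red v ∧ G.Adj u v))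
    (hωR : ∀ M : Set V, IsMaxCliqueIn G {v | red v} M → Cardinal.mk M = Cardinal.aleph0) :
    ∀ r k : ℕ,
      (∃ S : Finset V, S.card = k ∧ (∀ v ∈ S, ¬ red v) ∧
        (∀ u ∈ S, ∀ v ∈ S, ¬ G.Adj u v)) →
      ((∃ (C S : Finset V), C.card = r ∧ S.card = k ∧
          (∀ v ∈ C, red v) ∧ (∀ v ∈ S, ¬ red v) ∧
          (∀ u ∈ C, ∀ v ∈ C, u ≠ v → G.Adj u v) ∧ (∀ u ∈ S, ∀ v ∈ S, ¬ G.Adj u v) ∧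
          (∀ u ∈ C, ∀ v ∈ S, G.Adj u v)) ∧
       (∃ (C S : Finset V), C.card = r ∧ S.card = k ∧
          (∀ v ∈ C, red v) ∧ (∀ v ∈ S, ¬ red v) ∧
          (∀ u ∈ C, ∀ v ∈ C, u ≠ v → G.Adj u v) ∧ (∀ u ∈ S, ∀ v ∈ S, ¬ G.Adj u v) ∧
          (∀ u ∈ C, ∀ v ∈ S, ¬ G.Adj u v))) := by
  obtain ⟨⟨-, -, hU, hR, hB⟩, hnb, hα, -⟩ := hG
  intro r k hk
  have h := fun ε => stmt_13_general hU hR hB (fun h => hnb (Or.inl h)) hα hωR ε r k hk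
  exact ⟨by simpa only [iff_true] using h True, by simpa only [iff_false] using h False⟩
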